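/- Let φ : ℝⁿ → ℝ be continuous and ψ : ℝⁿ → ℝ ∪ {+∞} proper lower semicontinuous with ψ(0) finite, and let p(Δ) := inf_{‖s‖ ≤ Δ} (φ(s) + ψ(s)). If Δ̄ > 0 and there exists a minimizer s̄ ∈ P(Δ̄) with ‖s̄‖ < Δ̄, then p is continuous at Δ̄; in particular p(Δ_k) → p(Δ̄) for every sequence Δ_k → Δ̄ with Δ_k ≥ 0. -/

import Mathlib

open Set Filter

/-! The value function `r ↦ inf {f x | g x ≤ r}` is antitone, so only two one-sided estimates
matter. Values cannot jump down as `r` increases past `r₀`: on a compact sublevel set of `g`, the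
points where `f ≤ b` form a compact set on which `g` attains its minimum, and this minimum exceeds
`r₀` as soon as `f > b` on `{g ≤ r₀}`. Values cannot jump up as `r` decreases past `r₀`, because a
minimizer with `g x₀ < r₀` stays feasible. -/

/-- The optimal value of the parametric problem of minimizing `f` subject to `g x ≤ r`, as a
function of `r`. The trust-region value function is the case of `g = ‖·‖`. In a complete lattice
the value of an infeasible problem is `⊤`. -/
def constrainedInf {X β γ : Type*} [CompleteLattice β] [LE γ] (f : X → β) (g : X → γ) (r : γ) : β :=
  ⨅ x ∈ {x | g x ≤ r}, f x

section

variable {X β γ : Type*} [LinearOrder γ] [TopologicalSpace γ] {f : X → β} {g : X → γ} {r₀ : γ}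

theorem eventually_forall_lt_of_isCompact [TopologicalSpace X] [LinearOrder β]
    [ClosedIciTopology γ] {K : Set X} (hK : IsCompact K) (hf : LowerSemicontinuousOn f K)
    (hg : LowerSemicontinuousOn g K) {b : β} (hb : ∀ x ∈ K, g x ≤ r₀ → b < f x) :
    ∀ᶠ r in nhds r₀, ∀ x ∈ K, g x ≤ r → b < f x := by
  obtain hempty | hne := (K ∩ f ⁻¹' Iic b).eq_empty_or_nonempty
  · exact .of_forall fun r x hxK _ => not_le.1 fun hxb => hempty.le ⟨hxK, hxb⟩
  · obtain ⟨m, ⟨hmK, hmb⟩, hmin⟩ := (hg.mono inter_subset_left).exists_isMinOn hne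
      (hf.isCompact_inter_preimage_Iic hK b)
    have hm : r₀ < g m := not_le.1 fun hle => (hb m hmK hle).not_ge hmb
    filter_upwards [Iio_mem_nhds hm] with r hr x hxK hxr
    exact not_le.1 fun hxb => (hxr.trans_lt hr).not_ge (hmin ⟨hxK, hxb⟩)

theorem lowerSemicontinuousAt_constrainedInf [TopologicalSpace X] [CompleteLinearOrder β]
    [DenselyOrdered β] [ClosedIciTopology γ] {r₁ : γ} (hr : r₀ < r₁)
    (hK : IsCompact {x | g x ≤ r₁}) (hf : LowerSemicontinuousOn f {x | g x ≤ r₁})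
    (hg : LowerSemicontinuousOn g {x | g x ≤ r₁}) :
    LowerSemicontinuousAt (constrainedInf f g) r₀ := by
  intro a ha
  obtain ⟨b, hab, hb⟩ := exists_between ha
  have hlt : ∀ x ∈ {x | g x ≤ r₁}, g x ≤ r₀ → b < f x :=
    fun x _ hx => hb.trans_le (iInf₂_le x hx)
  filter_upwards [eventually_forall_lt_of_isCompact hK hf hg hlt, Iio_mem_nhds hr]
    with r hforall hr₁
  exact hab.trans_le (le_iInf₂ fun x hx => (hforall x (hx.trans hr₁.le) hx).le)

theorem upperSemicontinuousAt_constrainedInf [CompleteLattice β] [ClosedIicTopology γ] {x₀ : X}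
    (hx₀ : g x₀ < r₀) (hmin : IsMinOn f {x | g x ≤ r₀} x₀) :
    UpperSemicontinuousAt (constrainedInf f g) r₀ := by
  intro a ha
  have hfa : f x₀ < a := (le_iInf₂ hmin).trans_lt ha
  filter_upwards [Ioi_mem_nhds hx₀] with r hr
  exact (iInf₂_le x₀ hr.le).trans_lt hfa

theorem stmt_4_general [TopologicalSpace X] [CompleteLinearOrder β] [DenselyOrdered β]
    [TopologicalSpace β] [OrderTopology β] [OrderClosedTopology γ] {r₁ : γ} (hr : r₀ < r₁)
    (hK : IsCompact {x | g x ≤ r₁}) (hf : LowerSemicontinuousOn f {x | g x ≤ r₁})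
    (hg : LowerSemicontinuousOn g {x | g x ≤ r₁}) {x₀ : X} (hx₀ : g x₀ < r₀)
    (hmin : IsMinOn f {x | g x ≤ r₀} x₀) :
    ContinuousAt (constrainedInf f g) r₀ :=
  continuousAt_iff_lower_upperSemicontinuousAt.2
    ⟨lowerSemicontinuousAt_constrainedInf hr hK hf hg,
      upperSemicontinuousAt_constrainedInf hx₀ hmin⟩

end

theorem lowerSemicontinuous_coe_add {X : Type*} [TopologicalSpace X] {φ : X → ℝ} {ψ : X → EReal}
    (hφ : LowerSemicontinuous φ) (hψ : LowerSemicontinuous ψ) :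
    LowerSemicontinuous fun x => (φ x : EReal) + ψ x :=
  (continuous_coe_real_ereal.comp_lowerSemicontinuous hφ EReal.coe_strictMono.monotone).add' hψ
    fun _ => EReal.continuousAt_add (.inl (EReal.coe_ne_top _)) (.inl (EReal.coe_ne_bot _))

theorem isCompact_setOf_norm_le {E : Type*} [SeminormedAddCommGroup E] [ProperSpace E] (r : ℝ) :
    IsCompact {x : E | ‖x‖ ≤ r} := by
  simpa only [Metric.closedBall, dist_zero_right] using isCompact_closedBall (0 : E) r

/-- If `Δ̄ > 0` and some minimizer `s̄ ∈ P(Δ̄)` satisfies `‖s̄‖ < Δ̄`, then the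
value function `p` is continuous at `Δ̄`; in particular `p(Δ_k) → p(Δ̄)` for every sequence
`Δ_k → Δ̄` with `Δ_k ≥ 0`. -/
theorem stmt_4 (n : ℕ)
    (φ : EuclideanSpace ℝ (Fin n) → ℝ) (hφ : Continuous φ)
    (ψ : EuclideanSpace ℝ (Fin n) → EReal)
    (hψ_ne_bot : ∀ s, ψ s ≠ ⊥)
    (hψ_lsc : LowerSemicontinuous ψ)
    (hψ0 : ψ 0 ≠ ⊤)
    (p : ℝ → EReal)
    (hp : ∀ Δ : ℝ,
      p Δ = ⨅ s ∈ {s : EuclideanSpace ℝ (Fin n) | ‖s‖ ≤ Δ}, ((φ s : EReal) + ψ s))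
    (P : ℝ → Set (EuclideanSpace ℝ (Fin n)))
    (hP : ∀ Δ : ℝ, P Δ = {s : EuclideanSpace ℝ (Fin n) | ‖s‖ ≤ Δ ∧
      ∀ t, ‖t‖ ≤ Δ → (φ s : EReal) + ψ s ≤ (φ t : EReal) + ψ t})
    (Δbar : ℝ) (hΔbar : 0 < Δbar)
    (sbar : EuclideanSpace ℝ (Fin n)) (hsbar : sbar ∈ P Δbar) (hsbarlt : ‖sbar‖ < Δbar) :
    ContinuousAt p Δbar ∧
    ∀ Δ : ℕ → ℝ, (∀ k, 0 ≤ Δ k) → Tendsto Δ atTop (nhds Δbar) →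
      Tendsto (fun k => p (Δ k)) atTop (nhds (p Δbar)) := by
  obtain rfl : p = constrainedInf (fun s => (φ s : EReal) + ψ s) norm := funext hp
  have hcont := stmt_4_general (lt_add_one Δbar) (isCompact_setOf_norm_le _)
    ((lowerSemicontinuous_coe_add hφ.lowerSemicontinuous hψ_lsc).lowerSemicontinuousOn _)
    continuous_norm.continuousOn.lowerSemicontinuousOn hsbarlt (hP Δbar ▸ hsbar).2
  exact ⟨hcont, fun Δ _ hΔ => hcont.tendsto.comp hΔ⟩
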